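/- Suppose n ≡ 3 (mod 4). If φ is an {(n−1)/2, (n+1)/2, n}-isometry of C_n fixing 0̄ that is not an even isometry, then there exist i, j ∈ {1,...,n} and a σ_{i,j}-mapping τ such that φ coincides with τ on E and with T_{1̄^j} ∘ τ on O, where 1̄^j denotes the word with 1 in every position except a 0 in position j. Conversely, for every σ_{i,j}-mapping τ, the map equal to τ on E and to T_{1̄^j} ∘ τ on O is an {(n−1)/2, (n+1)/2, n}-isometry of C_n fixing 0̄. -/

import Mathlib

/-- The `σ_{i,j}`-mapping of the Boolean cube `C_n` associated with coordinates `i, j` and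
a bijection `σ : {1,…,n} \ {i} → {1,…,n} \ {j}`. -/
def sigmaMap (n : ℕ) (i j : Fin n)
    (σ : {k : Fin n // k ≠ i} ≃ {k : Fin n // k ≠ j}) :
    (Fin n → ZMod 2) → Fin n → ZMod 2 :=
  fun c k => if h : k = j then c i else c (σ.symm ⟨k, h⟩).1 + c i

section helpers
open Finset

lemma z2_ne {a b : ZMod 2} : a ≠ b ↔ b = a + 1 := by revert a b; decide
lemma z2_cases (a : ZMod 2) : a = 0 ∨ a = 1 := by revert a; decide

lemma hd_sum {n : ℕ} (x y : Fin n → ZMod 2) :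
    hammingDist x y = ∑ k, if x k ≠ y k then 1 else 0 := by
  unfold hammingDist
  rw [Finset.card_filter]

lemma hd_le {n : ℕ} (x y : Fin n → ZMod 2) : hammingDist x y ≤ n := by
  simpa using hammingDist_le_card_fintype (x := x) (y := y)

lemma hd_cast {n : ℕ} (x y : Fin n → ZMod 2) :
    ((hammingDist x y : ℕ) : ZMod 2) = ∑ k, x k + ∑ k, y k := by
  rw [hd_sum, ← Finset.sum_add_distrib]
  push_cast
  apply Finset.sum_congr rfl
  intro k _
  generalize x k = a
  generalize y k = b
  revert a b
  decide

lemma even_iff_z2 (d : ℕ) : Even d ↔ ((d : ℕ) : ZMod 2) = 0 := by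
  rw [ZMod.natCast_eq_zero_iff, even_iff_two_dvd]

lemma even_hd {n : ℕ} (x y : Fin n → ZMod 2) :
    Even (hammingDist x y) ↔ ∑ k, x k = ∑ k, y k := by
  rw [even_iff_z2, hd_cast]
  generalize ∑ k, x k = a
  generalize ∑ k, y k = b
  revert a b
  decide

lemma even_hn {n : ℕ} (x : Fin n → ZMod 2) :
    Even (hammingNorm x) ↔ ∑ k, x k = 0 := by
  rw [← hammingDist_zero_right, even_hd]
  simp

lemma hd_add_one {n : ℕ} (x y : Fin n → ZMod 2) :
    hammingDist x (y + 1) + hammingDist x y = n := by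
  rw [hd_sum, hd_sum, ← Finset.sum_add_distrib]
  have key : ∀ a b : ZMod 2, ((if a ≠ b + 1 then 1 else 0) + (if a ≠ b then 1 else 0) : ℕ) = 1 := by
    decide
  exact (Finset.sum_congr rfl (fun k _ => key (x k) (y k))).trans (by simp)

lemma eq_add_one {n : ℕ} {x y : Fin n → ZMod 2} (h : hammingDist x y = n) : y = x + 1 := by
  have h1 := hd_add_one y x
  rw [hammingDist_comm y x, h] at h1
  exact hammingDist_eq_zero.1 (by omega)

lemma hd_flip {n : ℕ} (x y : Fin n → ZMod 2) (a : Fin n) :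
    (x a = y a → hammingDist x (y + Pi.single a 1) = hammingDist x y + 1) ∧
    (x a ≠ y a → hammingDist x (y + Pi.single a 1) + 1 = hammingDist x y) := by
  rw [hd_sum, hd_sum, ← Finset.add_sum_erase _ _ (mem_univ a),
    ← Finset.add_sum_erase (a := a) _ (fun k => if x k ≠ y k then 1 else 0) (mem_univ a)]
  have : ∑ k ∈ univ.erase a, (if x k ≠ (y + Pi.single a 1 : Fin n → ZMod 2) k then 1 else 0 : ℕ)
      = ∑ k ∈ univ.erase a, (if x k ≠ y k then 1 else 0 : ℕ) := by
    apply Finset.sum_congr rfl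
    intro k hk
    have : k ≠ a := by simpa using hk
    simp [this]
  rw [this]
  constructor
  · intro h
    have h2 : x a ≠ y a + 1 := by rw [h]; generalize y a = b; revert b; decide
    simp [h, add_comm]
  · intro h
    have h2 : x a = y a + 1 := z2_ne.1 (Ne.symm h)
    simp [h2, add_comm]

def Qind {n : ℕ} : Option (Fin n) → Fin n → ZMod 2
  | none => 1
  | some a => Pi.single a 1

def Qpair {n : ℕ} (u v : Option (Fin n)) : Fin n → ZMod 2 := Qind u + Qind v

def hatw {n : ℕ} (e : Fin n → ZMod 2) : Option (Fin n) → ZMod 2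
  | none => 0
  | some a => e a

def Rrel {n : ℕ} (e q : Fin n → ZMod 2) : Prop :=
  hammingDist e q = hammingDist e 0 ∨ hammingDist e q + hammingDist e 0 = n + 1

lemma Qpair_comm {n : ℕ} (u v : Option (Fin n)) : Qpair u v = Qpair v u := add_comm _ _

lemma Rrel_none {n : ℕ} (hn : n % 4 = 3) (e : Fin n → ZMod 2) (he : Even (hammingDist e 0))
    (a : Fin n) : Rrel e (Qpair none (some a)) ↔ e a ≠ 0 := by
  have h1 := hd_add_one e (0 + Pi.single a 1)
  have h2 := hd_flip e 0 a
  have h3 : Qpair none (some a) = (0 + Pi.single a 1 : Fin n → ZMod 2) + 1 := by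
    simp [Qpair, Qind, add_comm]
  rw [h3]
  unfold Rrel
  have := hd_le e 0
  obtain ⟨r, hr⟩ := he
  simp only [Pi.zero_apply] at h2
  by_cases h : e a = 0
  · have := h2.1 h
    simp only [h, ne_eq, not_true_eq_false, iff_false]
    omega
  · have := h2.2 h
    simp only [ne_eq, h, not_false_eq_true, iff_true]
    omega

lemma Rrel_some {n : ℕ} (hn : n % 4 = 3) (e : Fin n → ZMod 2) (he : Even (hammingDist e 0))
    (a b : Fin n) (hab : a ≠ b) : Rrel e (Qpair (some a) (some b)) ↔ e a ≠ e b := by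
  have h1 := hd_flip e 0 a
  have h2 := hd_flip e (0 + Pi.single a 1) b
  have h3 : Qpair (some a) (some b) = ((0 + Pi.single a 1 : Fin n → ZMod 2) + Pi.single b 1) := by
    simp [Qpair, Qind]
  rw [h3]
  have h4 : (0 + Pi.single a 1 : Fin n → ZMod 2) b = 0 := by simp [hab.symm]
  rw [h4] at h2
  unfold Rrel
  have := hd_le e 0
  obtain ⟨r, hr⟩ := he
  simp only [Pi.zero_apply] at h1
  rcases z2_cases (e a) with ha | ha <;> rcases z2_cases (e b) with hb | hb <;>
    simp [ha, hb] at h1 h2 this hr ⊢ <;> omega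

lemma Rrel_hat {n : ℕ} (hn : n % 4 = 3) (e : Fin n → ZMod 2) (he : Even (hammingDist e 0))
    (u v : Option (Fin n)) (huv : u ≠ v) : Rrel e (Qpair u v) ↔ hatw e u ≠ hatw e v := by
  cases u with
  | none => cases v with
    | none => exact absurd rfl huv
    | some a => rw [Rrel_none hn e he]; simp [hatw, eq_comm]
  | some a => cases v with
    | none => rw [Qpair_comm, Rrel_none hn e he]; simp [hatw]
    | some b => rw [Rrel_some hn e he _ _ (by simpa using huv)]; simp [hatw]

lemma exists_Q {n : ℕ} (hn : n % 4 = 3) (e : Fin n → ZMod 2)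
    (he : hammingDist e 0 = 2 ∨ hammingDist e 0 + 2 = n + 1) :
    ∃ u v, u ≠ v ∧ e = Qpair u v := by
  rcases he with he | he
  · unfold hammingDist at he
    obtain ⟨a, b, hab, h⟩ := Finset.card_eq_two.1 he
    refine ⟨some a, some b, by simpa using hab, ?_⟩
    funext k
    have hk : e k ≠ 0 ↔ k = a ∨ k = b := by
      have := Finset.ext_iff.1 h k
      simpa using this
    simp only [Qpair, Qind, Pi.add_apply, Pi.single_apply]
    rcases z2_cases (e k) with h0 | h0 <;> simp [h0] at hk ⊢
    · simp [hk]
    · rcases hk with rfl | rfl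
      · simp [hab]
      · simp [hab.symm]
  · have h1 := hd_add_one 0 e
    rw [hammingDist_comm 0 e] at h1
    have h2 : hammingDist 0 (e + 1) = 1 := by omega
    unfold hammingDist at h2
    obtain ⟨a, h⟩ := Finset.card_eq_one.1 h2
    refine ⟨none, some a, by simp, ?_⟩
    funext k
    have hk : e k + 1 ≠ 0 ↔ k = a := by
      have := Finset.ext_iff.1 h k
      simpa [eq_comm] using this
    simp only [Qpair, Qind, Pi.add_apply, Pi.single_apply, Pi.one_apply]
    rcases z2_cases (e k) with h0 | h0
    · have := hk.1 (by rw [h0]; decide)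
      rw [h0, if_pos this]; decide
    · have : ¬ k = a := fun h => hk.2 h (by rw [h0]; decide)
      simp [h0, this]

lemma hatQ {n : ℕ} (u v : Option (Fin n)) (huv : u ≠ v) (x y : Option (Fin n)) (hxy : x ≠ y) :
    hatw (Qpair u v) x ≠ hatw (Qpair u v) y ↔
      ((x = u ∨ x = v) ∧ ¬ (y = u ∨ y = v)) ∨ (¬ (x = u ∨ x = v) ∧ (y = u ∨ y = v)) := by
  have key : ∀ w, hatw (Qpair u v) w = (if w = u then 1 else 0) + (if w = v then 1 else 0)
      + ((if none = u then 1 else 0) + (if none = v then 1 else 0)) := by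
    intro w
    cases u <;> cases v <;> cases w <;>
      simp [hatw, Qpair, Qind, Pi.single_apply] <;> (try decide) <;> (try split_ifs) <;>
      (try decide) <;> simp_all
  rw [key, key]
  generalize ((if none = u then 1 else 0) + (if none = v then 1 else 0) : ZMod 2) = t
  rw [Ne, add_left_inj]
  split_ifs <;> simp_all <;> decide

lemma even_Q {n : ℕ} (hn : n % 4 = 3) (u v : Option (Fin n)) :
    Even (hammingDist (Qpair u v) 0) := by
  rw [even_hd]
  have h : ((n : ℕ) : ZMod 2) = 1 := by
    have : n = 2 * (n / 2) + 1 := by omega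
    rw [this]; push_cast; rw [show (2 : ZMod 2) = 0 from rfl]; simp
  cases u <;> cases v <;> simp [Qpair, Qind, Finset.sum_add_distrib, h] <;> decide

/-- counting common neighbours -/
lemma count_nb {n i h : ℕ} (x y : Fin n → ZMod 2) (hd : hammingDist x y = 2 * i) (hi : i ≤ h) :
    (univ.filter (fun z : Fin n → ZMod 2 => hammingDist x z = h ∧ hammingDist y z = h)).card
      = (2 * i).choose i * (n - 2 * i).choose (h - i) := by
  set U : Finset (Fin n) := univ.filter (fun k => x k ≠ y k) with hU
  have hUc : U.card = 2 * i := hd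
  have hUc' : Uᶜ.card = n - 2 * i := by rw [card_compl, hUc]; simp
  rw [← hUc', ← hUc, show U.card.choose i = (powersetCard i U).card by rw [card_powersetCard],
    ← card_powersetCard, ← card_product]
  have hx : ∀ z : Fin n → ZMod 2, hammingDist x z
      = (U.filter (fun k => x k ≠ z k)).card + (Uᶜ.filter (fun k => x k ≠ z k)).card := by
    intro z
    unfold hammingDist
    rw [← card_union_of_disjoint, ← filter_union, union_compl]
    exact disjoint_filter_filter disjoint_compl_right
  have hy : ∀ z : Fin n → ZMod 2, hammingDist y z + (U.filter (fun k => x k ≠ z k)).card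
      = 2 * i + (Uᶜ.filter (fun k => x k ≠ z k)).card := by
    intro z
    have h1 : hammingDist y z
      = (U.filter (fun k => y k ≠ z k)).card + (Uᶜ.filter (fun k => y k ≠ z k)).card := by
      unfold hammingDist
      rw [← card_union_of_disjoint, ← filter_union, union_compl]
      exact disjoint_filter_filter disjoint_compl_right
    have h2 : (Uᶜ.filter (fun k => y k ≠ z k)) = (Uᶜ.filter (fun k => x k ≠ z k)) := by
      apply filter_congr
      intro k hk
      have : x k = y k := by simpa [hU] using hk
      rw [this]
    have h3 : (U.filter (fun k => y k ≠ z k)) = (U.filter (fun k => ¬ x k ≠ z k)) := by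
      apply filter_congr
      intro k hk
      have : x k ≠ y k := by simpa [hU] using hk
      revert this
      generalize x k = a
      generalize y k = b
      generalize z k = c
      revert a b c
      decide
    have h4 := card_filter_add_card_filter_not (s := U) (fun k => x k ≠ z k)
    rw [h1, h2, h3]
    omega
  apply Finset.card_bij' (fun z _ => (U.filter (fun k => x k ≠ z k), Uᶜ.filter (fun k => x k ≠ z k)))
    (fun p _ => fun k => x k + if k ∈ p.1 ∪ p.2 then 1 else 0)
  · intro z hz
    simp only [mem_filter, mem_univ, true_and] at hz
    have h1 := hx z
    have h2 := hy z
    simp only [mem_product, mem_powersetCard, filter_subset, true_and]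
    omega
  · intro p hp
    simp only [mem_product, mem_powersetCard] at hp
    obtain ⟨⟨hp1, hp2⟩, hp3, hp4⟩ := hp
    have hne : ∀ k, (x k ≠ x k + if k ∈ p.1 ∪ p.2 then 1 else 0) ↔ k ∈ p.1 ∪ p.2 := by
      intro k
      split_ifs with h <;> simp [h]
    have e1 : U.filter (fun k => x k ≠ x k + if k ∈ p.1 ∪ p.2 then 1 else 0) = p.1 := by
      ext k
      rw [mem_filter, hne, mem_union]
      constructor
      · rintro ⟨hk, h | h⟩
        · exact h
        · exact absurd hk (mem_compl.1 (hp3 h))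
      · intro h; exact ⟨hp1 h, Or.inl h⟩
    have e2 : Uᶜ.filter (fun k => x k ≠ x k + if k ∈ p.1 ∪ p.2 then 1 else 0) = p.2 := by
      ext k
      rw [mem_filter, hne, mem_union]
      constructor
      · rintro ⟨hk, h | h⟩
        · exact absurd (hp1 h) (mem_compl.1 hk)
        · exact h
      · intro h; exact ⟨hp3 h, Or.inr h⟩
    have h1 := hx (fun k => x k + if k ∈ p.1 ∪ p.2 then 1 else 0)
    have h2 := hy (fun k => x k + if k ∈ p.1 ∪ p.2 then 1 else 0)
    rw [e1, e2] at h1 h2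
    simp only [mem_filter, mem_univ, true_and]
    omega
  · intro z hz
    funext k
    have : k ∈ U.filter (fun k => x k ≠ z k) ∪ Uᶜ.filter (fun k => x k ≠ z k) ↔ x k ≠ z k := by
      rw [← filter_union, union_compl]; simp
    simp only [this]
    split_ifs with h
    · exact (z2_ne.1 h).symm
    · simpa using h
  · intro p hp
    simp only [mem_product, mem_powersetCard] at hp
    obtain ⟨⟨hp1, hp2⟩, hp3, hp4⟩ := hp
    have hne : ∀ k, (x k ≠ x k + if k ∈ p.1 ∪ p.2 then 1 else 0) ↔ k ∈ p.1 ∪ p.2 := by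
      intro k
      split_ifs with h <;> simp [h]
    ext k
    · rw [mem_filter, hne, mem_union]
      constructor
      · rintro ⟨hk, h | h⟩
        · exact h
        · exact absurd hk (mem_compl.1 (hp3 h))
      · intro h; exact ⟨hp1 h, Or.inl h⟩
    · rw [mem_filter, hne, mem_union]
      constructor
      · rintro ⟨hk, h | h⟩
        · exact absurd (hp1 h) (mem_compl.1 hk)
        · exact h
      · intro h; exact ⟨hp3 h, Or.inr h⟩

lemma choose_half (M : ℕ) (hM : 1 ≤ M) : 2 * (2 * M - 1).choose M = M.centralBinom := by
  obtain ⟨m, rfl⟩ : ∃ m, M = m + 1 := ⟨M - 1, by omega⟩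
  rw [Nat.centralBinom_eq_two_mul_choose, show 2 * (m + 1) = (2 * m + 1) + 1 by ring,
    Nat.choose_succ_succ']
  have := Nat.choose_symm_half m
  simp only [Nat.add_sub_cancel]
  omega

lemma g_lt {h i : ℕ} (hi : 2 * i + 1 < h) :
    (i + 1).centralBinom * (h - (i + 1)).centralBinom < i.centralBinom * (h - i).centralBinom := by
  obtain ⟨m, rfl⟩ : ∃ m, h = i + (m + 1) := ⟨h - i - 1, by omega⟩
  rw [show i + (m + 1) - (i + 1) = m by omega, show i + (m + 1) - i = m + 1 by omega]
  have h1 := Nat.succ_mul_centralBinom_succ i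
  have h2 := Nat.succ_mul_centralBinom_succ m
  have p1 := Nat.centralBinom_pos i
  have p2 := Nat.centralBinom_pos m
  set A := i.centralBinom
  set B := m.centralBinom
  set A' := (i + 1).centralBinom
  set B' := (m + 1).centralBinom
  have hAB : 0 < A * B := Nat.mul_pos p1 p2
  apply lt_of_mul_lt_mul_left (a := (i + 1) * (m + 1)) _ (Nat.zero_le _)
  have e1 : (i + 1) * (m + 1) * (A' * B) = (m + 1) * (2 * (2 * i + 1)) * (A * B) := by
    calc _ = (m + 1) * ((i + 1) * A') * B := by ring
      _ = _ := by rw [h1]; ring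
  have e2 : (i + 1) * (m + 1) * (A * B') = (i + 1) * (2 * (2 * m + 1)) * (A * B) := by
    calc _ = (i + 1) * ((m + 1) * B') * A := by ring
      _ = _ := by rw [h2]; ring
  rw [e1, e2]
  apply Nat.mul_lt_mul_of_pos_right _ hAB
  nlinarith

lemma g_lt' {h i j : ℕ} (hij : i < j) (hj : 2 * j ≤ h) :
    j.centralBinom * (h - j).centralBinom < i.centralBinom * (h - i).centralBinom := by
  induction j, hij using Nat.le_induction with
  | base => exact g_lt (by omega)
  | succ j hj' ih => exact (g_lt (by omega)).trans (ih (by omega))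

lemma g_inj {h i j : ℕ} (hi : i ≤ h) (hj : j ≤ h)
    (e : i.centralBinom * (h - i).centralBinom = j.centralBinom * (h - j).centralBinom) :
    i = j ∨ i + j = h := by
  have main : ∀ i j : ℕ, 2 * i ≤ h → 2 * j ≤ h →
      i.centralBinom * (h - i).centralBinom = j.centralBinom * (h - j).centralBinom → i = j := by
    intro i j hi hj e
    rcases lt_trichotomy i j with l | l | l
    · exact absurd e (g_lt' l hj).ne'
    · exact l
    · exact absurd e (g_lt' l hi).ne
  have sy : ∀ i, i ≤ h → i.centralBinom * (h - i).centralBinom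
      = (h - i).centralBinom * (h - (h - i)).centralBinom := by
    intro i hi
    rw [show h - (h - i) = i by omega, mul_comm]
  rcases le_total (2 * i) h with a | a <;> rcases le_total (2 * j) h with b | b
  · have := main i j a b e; omega
  · rw [sy j hj] at e
    have := main i (h - j) a (by omega) e; omega
  · rw [sy i hi] at e
    have := main (h - i) j (by omega) b e; omega
  · rw [sy i hi, sy j hj] at e
    have := main (h - i) (h - j) (by omega) (by omega) e; omega

/-- `φ` preserves folded even distances. -/
lemma fold_preserved {n h : ℕ} (hn : n + 1 = 2 * h) (hh : Even h)
    (φ : (Fin n → ZMod 2) → Fin n → ZMod 2) (hφ : Function.Injective φ)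
    (H : ∀ x y, hammingDist x y = h → hammingDist (φ x) (φ y) = h)
    (x y : Fin n → ZMod 2) (hxy : Even (hammingDist x y)) :
    Even (hammingDist (φ x) (φ y)) ∧ (hammingDist (φ x) (φ y) = hammingDist x y ∨
      hammingDist (φ x) (φ y) + hammingDist x y = n + 1) := by
  have nb : ∀ x, (univ.filter (fun z => hammingDist x z = h)).image φ
      = univ.filter (fun z => hammingDist (φ x) z = h) := by
    intro x
    apply Finset.eq_of_subset_of_card_le
    · intro z hz
      simp only [mem_image, mem_filter, mem_univ, true_and] at hz ⊢
      obtain ⟨w, hw, rfl⟩ := hz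
      exact H _ _ hw
    · rw [card_image_of_injective _ hφ]
      have h1 := count_nb (h := h) (i := 0) x x (by simp) (by omega)
      have h2 := count_nb (h := h) (i := 0) (φ x) (φ x) (by simp) (by omega)
      simp only [and_self] at h1 h2
      rw [h1, h2]
  have nb2 : (univ.filter (fun z => hammingDist x z = h ∧ hammingDist y z = h)).card
      = (univ.filter (fun z => hammingDist (φ x) z = h ∧ hammingDist (φ y) z = h)).card := by
    rw [filter_and, filter_and, ← nb, ← nb, ← image_inter _ _ hφ, card_image_of_injective _ hφ]
  obtain ⟨i, hi⟩ := hxy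
  have hle := hd_le x y
  have hle' := hd_le (φ x) (φ y)
  have c1 := count_nb (h := h) (i := i) x y (by omega) (by omega)
  have g1 := choose_half (h - i) (by omega)
  have hev : Even (hammingDist (φ x) (φ y)) := by
    have : 0 < (univ.filter (fun z => hammingDist x z = h ∧ hammingDist y z = h)).card := by
      rw [c1]
      exact Nat.mul_pos (Nat.choose_pos (by omega)) (Nat.choose_pos (by omega))
    obtain ⟨z, hz⟩ := card_pos.1 this
    simp only [mem_filter, mem_univ, true_and] at hz
    have a1 := H _ _ hz.1
    have a2 := H _ _ hz.2
    rw [even_hd, (even_hd (φ x) (φ z)).1 (a1 ▸ hh), (even_hd (φ y) (φ z)).1 (a2 ▸ hh)]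
  refine ⟨hev, ?_⟩
  obtain ⟨j, hj⟩ := hev
  have c2 := count_nb (h := h) (i := j) (φ x) (φ y) (by omega) (by omega)
  have g2 := choose_half (h - j) (by omega)
  rw [c1, c2, show n - 2 * i = 2 * (h - i) - 1 by omega,
    show n - 2 * j = 2 * (h - j) - 1 by omega] at nb2
  have := g_inj (h := h) (i := i) (j := j) (by omega) (by omega) (by
    rw [← g1, ← g2, Nat.centralBinom_eq_two_mul_choose i, Nat.centralBinom_eq_two_mul_choose j]
    linarith)
  omega

/-- A pairwise-intersecting family of more than three pairs is a star. -/
lemma star {V : Type*} [DecidableEq V] {n : ℕ} (hn : 4 ≤ n) (u v : Fin n → V)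
    (huv : ∀ a, u a ≠ v a)
    (H : ∀ a b, a ≠ b → ((u a = u b ∨ u a = v b) ∧ ¬ (v a = u b ∨ v a = v b)) ∨
      (¬ (u a = u b ∨ u a = v b) ∧ (v a = u b ∨ v a = v b))) :
    ∃ t, ∀ a, u a = t ∨ v a = t := by
  have : ∃ t x y, x ≠ t ∧ y ≠ t ∧ x ≠ y ∧ ∃ a b : Fin n, a ≠ b ∧
    ((u a = t ∧ v a = x) ∨ (u a = x ∧ v a = t)) ∧ ((u b = t ∧ v b = y) ∨ (u b = y ∧ v b = t)) := by
    let a : Fin n := ⟨0, by omega⟩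
    let b : Fin n := ⟨1, by omega⟩
    have hab : a ≠ b := by simp [a, b]
    have h1 := huv a
    have h2 := huv b
    rcases H a b hab with ⟨h3 | h3, h4⟩ | ⟨h4, h3 | h3⟩
    · exact ⟨u a, v a, v b, by grind, by grind, by grind, a, b, hab, by grind, by grind⟩
    · exact ⟨u a, v a, u b, by grind, by grind, by grind, a, b, hab, by grind, by grind⟩
    · exact ⟨v a, u a, v b, by grind, by grind, by grind, a, b, hab, by grind, by grind⟩
    · exact ⟨v a, u a, u b, by grind, by grind, by grind, a, b, hab, by grind, by grind⟩
  obtain ⟨t, x, y, hx, hy, hxy, a, b, hab, ha, hb⟩ := this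
  refine ⟨t, ?_⟩
  by_contra hcon
  push Not at hcon
  obtain ⟨c, hc1, hc2⟩ := hcon
  have hca : c ≠ a := by grind
  have hcb : c ≠ b := by grind
  have hc := huv c
  have k1 := H c a hca
  have k2 := H c b hcb
  have hcc : (u c = x ∧ v c = y) ∨ (u c = y ∧ v c = x) := by grind
  obtain ⟨d, hd⟩ : ∃ d, d ∉ ({a, b, c} : Finset (Fin n)) := by
    by_contra hall
    push Not at hall
    have : (univ : Finset (Fin n)) ⊆ {a, b, c} := fun z _ => hall z
    have h1 := card_le_card this
    have h2 := card_le_three (a := a) (b := b) (c := c)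
    simp at h1
    omega
  simp only [mem_insert, mem_singleton, not_or] at hd
  have m1 := H d a hd.1
  have m2 := H d b hd.2.1
  have m3 := H d c hd.2.2
  have m4 := huv d
  grind

lemma one_sum {n : ℕ} (hn : n % 4 = 3) : ∑ k : Fin n, (1 : Fin n → ZMod 2) k = 1 := by
  have : n = 2 * (n / 2) + 1 := by omega
  simp
  rw [this]; push_cast; rw [show (2 : ZMod 2) = 0 from rfl]; simp

lemma hd_compl {n : ℕ} (x y : Fin n → ZMod 2) :
    hammingDist (x + 1) (y + 1) = hammingDist x y := by
  simp [hd_sum]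

end helpers

section helpers2
open Finset

lemma even_hn_add_one {n : ℕ} (hn : n % 4 = 3) (c : Fin n → ZMod 2)
    (hc : Odd (hammingNorm c)) : Even (hammingNorm (c + 1)) := by
  rw [even_hn]
  have h1 : ¬ ∑ k, c k = 0 := by rw [← even_hn]; exact Nat.not_even_iff_odd.2 hc
  have h2 := one_sum hn
  simp only [Pi.add_apply, Finset.sum_add_distrib, h2]
  rw [(z2_cases _).resolve_left h1]
  decide

lemma add_one_one {n : ℕ} (c : Fin n → ZMod 2) : c + 1 + 1 = c := by
  funext k
  simp only [Pi.add_apply, Pi.one_apply]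
  generalize c k = a
  revert a; decide

lemma odd_hn_add_one {n : ℕ} (hn : n % 4 = 3) (c : Fin n → ZMod 2)
    (hc : Even (hammingNorm c)) : Odd (hammingNorm (c + 1)) := by
  rw [← Nat.not_even_iff_odd, even_hn]
  have h2 := one_sum hn
  simp only [Pi.add_apply, Finset.sum_add_distrib, h2, (even_hn c).1 hc]
  decide

lemma sigma_add_one {n : ℕ} (i j : Fin n)
    (σ : {k : Fin n // k ≠ i} ≃ {k : Fin n // k ≠ j}) (c : Fin n → ZMod 2) :
    sigmaMap n i j σ (c + 1) + 1
      = sigmaMap n i j σ c + (fun k => if k = j then (0 : ZMod 2) else 1) := by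
  funext k
  have e1 : ∀ a : ZMod 2, a + 1 + 1 = a + 0 := by decide
  have e2 : ∀ a b : ZMod 2, a + 1 + (b + 1) + 1 = a + b + 1 := by decide
  by_cases h : k = j
  · simp [sigmaMap, h, e1]
  · simp [sigmaMap, h, e2]

lemma forward (n : ℕ) (hn : n % 4 = 3) (φ : (Fin n → ZMod 2) → Fin n → ZMod 2)
    (hφ : Function.Bijective φ) (h0 : φ 0 = 0)
    (H : ∀ x y, (hammingDist x y = (n - 1) / 2 ∨ hammingDist x y = (n + 1) / 2 ∨
          hammingDist x y = n) →
        hammingDist (φ x) (φ y) = hammingDist x y)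
    (hne : ¬(∀ x y, Even (hammingDist x y) →
        hammingDist (φ x) (φ y) = hammingDist x y)) :
      ∃ (i j : Fin n) (σ : {k : Fin n // k ≠ i} ≃ {k : Fin n // k ≠ j}),
        (∀ c, Even (hammingNorm c) → φ c = sigmaMap n i j σ c) ∧
        (∀ c, Odd (hammingNorm c) →
          φ c = sigmaMap n i j σ c +
            (fun k => if k = j then (0 : ZMod 2) else 1)) := by
  have hn4 : 4 ≤ n := by
    by_contra hlt
    apply hne
    intro x y hxy
    have h1 := hd_le x y
    by_cases h2 : hammingDist x y = 0
    · rw [hammingDist_eq_zero.1 h2]; simp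
    · apply H; omega
  have hcomp : ∀ c, φ (c + 1) = φ c + 1 := by
    intro c
    have h1 : hammingDist c (c + 1) = n := by simpa using hd_add_one c c
    have h2 := H c (c + 1) (by omega)
    exact eq_add_one (h2.trans h1)
  have F := fold_preserved (n := n) (h := (n + 1) / 2) (by omega) (by
    rw [Nat.even_iff]; omega) φ hφ.1 (fun x y h => (H x y (by omega)).trans h)
  have Ev : ∀ c, Even (hammingDist c 0) → Even (hammingDist (φ c) 0) := by
    intro c hc
    have := (F c 0 hc).1
    rwa [h0] at this
  -- the relation R is preserved
  have RR : ∀ c q, Even (hammingDist c 0) → Even (hammingDist q 0) →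
      (Rrel (φ c) (φ q) ↔ Rrel c q) := by
    intro c q hc hq
    have h1 := (F c 0 hc).2
    have hcq : Even (hammingDist c q) := by
      rw [even_hd, (even_hd c 0).1 hc, (even_hd q 0).1 hq]
    have h2 := (F c q hcq).2
    rw [h0] at h1
    unfold Rrel
    have := hd_le c q
    have := hd_le c 0
    have := hd_le (φ c) (φ q)
    have := hd_le (φ c) 0
    obtain ⟨r, hr⟩ := hc
    obtain ⟨s, hs⟩ := hcq
    omega
  have hQ : ∀ a : Fin n, ∃ u v, u ≠ v ∧ φ (Qpair none (some a)) = Qpair u v := by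
    intro a
    apply exists_Q hn
    have h1 := (F (Qpair none (some a)) 0 (even_Q hn _ _)).2
    rw [h0] at h1
    have h2 : hammingDist (Qpair none (some a)) 0 + 1 = n := by
      have e1 := hd_add_one 0 (0 + Pi.single a 1 : Fin n → ZMod 2)
      have e2 := (hd_flip 0 0 a).1 rfl
      have e3 : Qpair none (some a) = (0 + Pi.single a 1 : Fin n → ZMod 2) + 1 := by
        simp [Qpair, Qind, add_comm]
      rw [e3, hammingDist_comm]
      rw [hammingDist_self] at e2
      omega
    omega
  choose u v huv hQ using hQ
  have hpair : ∀ a b, a ≠ b → ((u a = u b ∨ u a = v b) ∧ ¬ (v a = u b ∨ v a = v b)) ∨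
      (¬ (u a = u b ∨ u a = v b) ∧ (v a = u b ∨ v a = v b)) := by
    intro a b hab
    have h1 : Rrel (Qpair none (some b)) (Qpair none (some a)) := by
      rw [Rrel_hat hn _ (even_Q hn _ _) _ _ (by simp), hatQ _ _ (by simp) _ _ (by simp)]
      left
      simp [hab]
    rw [← RR _ _ (even_Q hn _ _) (even_Q hn _ _), hQ, hQ,
      Rrel_hat hn _ (even_Q hn _ _) _ _ (huv a), hatQ _ _ (huv b) _ _ (huv a)] at h1
    exact h1
  obtain ⟨t, ht⟩ := star hn4 u v huv hpair
  have hs : ∀ a, ∃ s, s ≠ t ∧ φ (Qpair none (some a)) = Qpair s t := by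
    intro a
    rcases ht a with h | h
    · exact ⟨v a, by rw [← h]; exact (huv a).symm, by rw [hQ, h, Qpair_comm]⟩
    · exact ⟨u a, by rw [← h]; exact huv a, by rw [hQ, h]⟩
  choose s hst hs using hs
  have sinj : Function.Injective s := by
    intro a b hab
    have h1 : φ (Qpair none (some a)) = φ (Qpair none (some b)) := by rw [hs, hs, hab]
    have h2 := hφ.1 h1
    by_contra hne
    have h3 := congrFun h2 a
    simp [Qpair, Qind, Pi.single_apply, hne] at h3
  have key : ∀ c, Even (hammingNorm c) → ∀ a, c a = hatw (φ c) (s a) + hatw (φ c) t := by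
    intro c hc a
    rw [← hammingDist_zero_right] at hc
    have h1 := RR c _ hc (even_Q hn none (some a))
    rw [hs, Rrel_hat hn _ (Ev c hc) _ _ (hst a), Rrel_hat hn _ hc _ _ (by simp)] at h1
    rw [show hatw c none = 0 from rfl, show hatw c (some a) = c a from rfl] at h1
    revert h1
    generalize hatw (φ c) (s a) = p
    generalize hatw (φ c) t = q
    generalize c a = r
    revert p q r
    decide
  have step : ∀ i j σ, (∀ c, Even (hammingNorm c) → φ c = sigmaMap n i j σ c) →
      (∀ c, Odd (hammingNorm c) →
          φ c = sigmaMap n i j σ c +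
            (fun k => if k = j then (0 : ZMod 2) else 1)) := by
    intro i j σ h c hc
    rw [← sigma_add_one, ← h _ (even_hn_add_one hn c hc), hcomp, add_one_one]
  cases t with
  | none =>
    exfalso
    apply hne
    have hp : ∀ a, ∃ b, s a = some b := fun a => Option.ne_none_iff_exists'.1 (hst a)
    choose π hπ using hp
    have πinj : Function.Injective π := by
      intro a b hab
      apply sinj
      rw [hπ, hπ, hab]
    have πbij : Function.Bijective π := Finite.injective_iff_bijective.1 πinj
    have main : ∀ x y, Even (hammingNorm x) → Even (hammingNorm y) →
        hammingDist (φ x) (φ y) = hammingDist x y := by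
      intro x y hx hy
      rw [hd_sum, hd_sum]
      symm
      apply Fintype.sum_bijective π πbij
      intro a
      rw [key x hx a, key y hy a, hπ]
      simp [hatw]
    intro x y hxy
    rcases Nat.even_or_odd (hammingNorm x) with hx | hx
    · apply main x y hx
      rw [even_hn] at hx ⊢
      rw [← hx, (even_hd _ _).1 hxy]
    · have hy : Odd (hammingNorm y) := by
        rw [← Nat.not_even_iff_odd, even_hn] at hx ⊢
        rwa [← (even_hd _ _).1 hxy]
      have := main _ _ (even_hn_add_one hn x hx) (even_hn_add_one hn y hy)
      rwa [hcomp, hcomp, hd_compl, hd_compl] at this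
  | some j =>
    obtain ⟨i, hi⟩ : ∃ i, s i = none := by
      have hb : Function.Bijective (fun a => (⟨s a, hst a⟩ : {w // w ≠ some j})) := by
        rw [Fintype.bijective_iff_injective_and_card]
        refine ⟨fun a b h => sinj (by simpa using h), ?_⟩
        simp [Fintype.card_subtype_compl]
      obtain ⟨i, hi⟩ := hb.2 ⟨none, by simp⟩
      exact ⟨i, by simpa using hi⟩
    have hp : ∀ a : {k : Fin n // k ≠ i}, ∃ b : {k : Fin n // k ≠ j}, s a.1 = some b.1 := by
      intro a
      have : s a.1 ≠ none := fun h => a.2 (sinj (h.trans hi.symm))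
      obtain ⟨b, hb⟩ := Option.ne_none_iff_exists'.1 this
      refine ⟨⟨b, ?_⟩, hb⟩
      rintro rfl
      exact hst _ hb
    choose π hπ using hp
    have πbij : Function.Bijective π := by
      rw [Fintype.bijective_iff_injective_and_card]
      refine ⟨fun a b h => ?_, by simp [Fintype.card_subtype_compl]⟩
      apply Subtype.ext
      apply sinj
      rw [hπ, hπ, h]
    let σ := Equiv.ofBijective π πbij
    have main : ∀ c, Even (hammingNorm c) → φ c = sigmaMap n i j σ c := by
      intro c hc
      have k0 := key c hc i
      rw [hi] at k0
      simp only [hatw, zero_add] at k0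
      funext k
      by_cases hk : k = j
      · simp [sigmaMap, hk, k0]
      · simp only [sigmaMap, hk, dite_false]
        have k1 := key c hc (σ.symm ⟨k, hk⟩).1
        rw [hπ, show π (σ.symm ⟨k, hk⟩) = ⟨k, hk⟩ from σ.apply_symm_apply _] at k1
        simp only [hatw] at k1
        rw [k1, k0]
        generalize φ c k = p
        generalize φ c j = q
        revert p q
        decide
    exact ⟨i, j, σ, main, step i j σ main⟩

lemma sigma_dist {n : ℕ} (i j : Fin n)
    (σ : {k : Fin n // k ≠ i} ≃ {k : Fin n // k ≠ j}) (x y : Fin n → ZMod 2) :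
    hammingDist (sigmaMap n i j σ x) (sigmaMap n i j σ y) = hammingDist x y ∨
    hammingDist (sigmaMap n i j σ x) (sigmaMap n i j σ y) + hammingDist x y = n + 1 := by
  have split : ∀ (i : Fin n) (f : Fin n → ℕ), ∑ k, f k = f i + ∑ k : {k : Fin n // k ≠ i}, f k := by
    intro i f
    rw [← Finset.add_sum_erase _ _ (mem_univ i)]
    congr 1
    apply Finset.sum_subtype
    simp
  have e1 := split i (fun k => if x k ≠ y k then 1 else 0)
  have e2 := split j (fun k => if sigmaMap n i j σ x k ≠ sigmaMap n i j σ y k then 1 else 0)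
  rw [← hd_sum] at e1 e2
  rw [e1, e2]
  have e3 : ∑ k : {k : Fin n // k ≠ j},
        (if sigmaMap n i j σ x k ≠ sigmaMap n i j σ y k then 1 else 0 : ℕ)
      = ∑ k : {k : Fin n // k ≠ i}, (if x k + x i ≠ y k + y i then 1 else 0 : ℕ) := by
    symm
    apply Fintype.sum_equiv σ
    intro k
    simp [sigmaMap, (σ k).2]
  rw [e3]
  have e4 : sigmaMap n i j σ x j = x i := by simp [sigmaMap]
  have e5 : sigmaMap n i j σ y j = y i := by simp [sigmaMap]
  rw [e4, e5]
  by_cases h : x i = y i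
  · left
    simp [h]
  · right
    have hn : 1 ≤ n := by have := i.2; omega
    have key : ∀ p q a b : ZMod 2, a ≠ b →
      ((if p + a ≠ q + b then 1 else 0) + (if p ≠ q then 1 else 0) : ℕ) = 1 := by decide
    have e6 : ∑ k : {k : Fin n // k ≠ i}, (if x k + x i ≠ y k + y i then 1 else 0 : ℕ)
        + ∑ k : {k : Fin n // k ≠ i}, (if x k ≠ y k then 1 else 0 : ℕ) = n - 1 := by
      rw [← Finset.sum_add_distrib]
      refine (Finset.sum_congr rfl (fun k _ => key (x k.1) (y k.1) _ _ h)).trans ?_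
      simp [Fintype.card_subtype_compl]
    rw [if_pos h]
    omega

lemma hd_add_right' {n : ℕ} (x y w : Fin n → ZMod 2) :
    hammingDist (x + w) (y + w) = hammingDist x y := by
  simp [hd_sum]

lemma backward (n : ℕ) (hn : n % 4 = 3) (i j : Fin n)
    (σ : {k : Fin n // k ≠ i} ≃ {k : Fin n // k ≠ j})
    (ψ : (Fin n → ZMod 2) → Fin n → ZMod 2)
    (hE : ∀ c, Even (hammingNorm c) → ψ c = sigmaMap n i j σ c)
    (hO : ∀ c, Odd (hammingNorm c) →
        ψ c = sigmaMap n i j σ c +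
          (fun k => if k = j then (0 : ZMod 2) else 1)) :
      Function.Bijective ψ ∧ ψ 0 = 0 ∧
      ∀ x y, (hammingDist x y = (n - 1) / 2 ∨ hammingDist x y = (n + 1) / 2 ∨
          hammingDist x y = n) →
        hammingDist (ψ x) (ψ y) = hammingDist x y := by
  have hcomp : ∀ c, ψ (c + 1) = ψ c + 1 := by
    intro c
    rcases Nat.even_or_odd (hammingNorm c) with hc | hc
    · rw [hO _ (odd_hn_add_one hn c hc), hE c hc, ← sigma_add_one, add_one_one]
    · rw [hE _ (even_hn_add_one hn c hc), hO c hc, ← sigma_add_one, add_one_one]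
  have same : ∀ x y, Even (hammingDist x y) → hammingDist (ψ x) (ψ y) = hammingDist x y ∨
      hammingDist (ψ x) (ψ y) + hammingDist x y = n + 1 := by
    intro x y hxy
    rcases Nat.even_or_odd (hammingNorm x) with hx | hx
    · have hy : Even (hammingNorm y) := by
        rw [even_hn] at hx ⊢
        rw [← hx, (even_hd _ _).1 hxy]
      rw [hE x hx, hE y hy]
      exact sigma_dist i j σ x y
    · have hy : Odd (hammingNorm y) := by
        rw [← Nat.not_even_iff_odd, even_hn] at hx ⊢
        rwa [← (even_hd _ _).1 hxy]
      rw [hO x hx, hO y hy, hd_add_right']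
      exact sigma_dist i j σ x y
  have opp : ∀ x y, ¬ Even (hammingDist x y) →
      hammingDist (ψ x) (ψ y) = hammingDist x y ∨
      hammingDist (ψ x) (ψ y) + hammingDist x y + 1 = n := by
    intro x y hxy
    have h1 := hd_add_one x y
    have h2 := hd_add_one (ψ x) (ψ y)
    have h3 : Even (hammingDist x (y + 1)) := by
      rw [Nat.even_iff] at hxy ⊢
      omega
    have h4 := same _ _ h3
    rw [hcomp] at h4
    omega
  refine ⟨?_, ?_, ?_⟩
  · rw [← Finite.injective_iff_bijective]
    intro x y hxy
    have h0 : hammingDist (ψ x) (ψ y) = 0 := by rw [hxy]; simp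
    have hle := hd_le x y
    apply hammingDist_eq_zero.1
    by_cases he : Even (hammingDist x y)
    · have := same _ _ he
      omega
    · have := opp _ _ he
      rw [Nat.even_iff] at he
      omega
  · rw [hE 0 (by simp)]
    funext k
    simp [sigmaMap]
  · intro x y h
    have hle := hd_le (ψ x) (ψ y)
    by_cases he : Even (hammingDist x y)
    · have := same _ _ he
      rw [Nat.even_iff] at he
      omega
    · have := opp _ _ he
      rw [Nat.even_iff] at he
      omega

end helpers2

/-- For `n ≡ 3 (mod 4)`: every `{(n-1)/2, (n+1)/2, n}`-isometry of `C_n` fixing `0̄` that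
is not an even isometry coincides with a `σ_{i,j}`-mapping `τ` on the even-weight words
and with `T_{1̄^j} ∘ τ` on the odd-weight words, where `1̄^j` has `1` everywhere except a
`0` in position `j`; conversely, every map of that form is such an isometry fixing `0̄`. -/
theorem tripleIsometry_three_mod_four (n : ℕ) (hn : n % 4 = 3) :
    (∀ φ : (Fin n → ZMod 2) → Fin n → ZMod 2,
      Function.Bijective φ → φ 0 = 0 →
      (∀ x y, (hammingDist x y = (n - 1) / 2 ∨ hammingDist x y = (n + 1) / 2 ∨
          hammingDist x y = n) →
        hammingDist (φ x) (φ y) = hammingDist x y) →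
      ¬(∀ x y, Even (hammingDist x y) →
        hammingDist (φ x) (φ y) = hammingDist x y) →
      ∃ (i j : Fin n) (σ : {k : Fin n // k ≠ i} ≃ {k : Fin n // k ≠ j}),
        (∀ c, Even (hammingNorm c) → φ c = sigmaMap n i j σ c) ∧
        (∀ c, Odd (hammingNorm c) →
          φ c = sigmaMap n i j σ c +
            (fun k => if k = j then (0 : ZMod 2) else 1))) ∧
    (∀ (i j : Fin n) (σ : {k : Fin n // k ≠ i} ≃ {k : Fin n // k ≠ j})
        (ψ : (Fin n → ZMod 2) → Fin n → ZMod 2),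
      (∀ c, Even (hammingNorm c) → ψ c = sigmaMap n i j σ c) →
      (∀ c, Odd (hammingNorm c) →
        ψ c = sigmaMap n i j σ c +
          (fun k => if k = j then (0 : ZMod 2) else 1)) →
      Function.Bijective ψ ∧ ψ 0 = 0 ∧
      ∀ x y, (hammingDist x y = (n - 1) / 2 ∨ hammingDist x y = (n + 1) / 2 ∨
          hammingDist x y = n) →
        hammingDist (ψ x) (ψ y) = hammingDist x y) := by
  exact ⟨forward n hn, backward n hn⟩
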